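/- Let D ≥ 2 and consider the sequence of polynomial differential operators 0 → Ω⁰ →(d) Ω¹ →(δd) Ω¹ →(δ) Ω⁰ → 0, where Ω⁰ = ℂ[x^0,…,x^{D−1}], Ω¹ is the space of polynomial vector fields, (dR)_μ = ∂_μ R, (δP) = Σ_μ ∂^μ P_μ, and (δdP)_μ = □P_μ − ∂_μ(Σ_ν ∂^ν P_ν). This sequence is exact at the last two terms: (i) δ : Ω¹ → Ω⁰ is surjective, i.e. every polynomial f can be written as f = Σ_μ ∂^μ P_μ for some polynomial vector field P; and (ii) every divergence-free polynomial vector field is in the image of δd, i.e. if Σ_μ ∂^μ P_μ = 0 then there exists a polynomial vector field Q with P_μ = □Q_μ − ∂_μ(Σ_ν ∂^ν Q_ν) for all μ. -/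

import Mathlib

open MvPolynomial

/-- The partial derivative `∂_μ` on `ℂ[x^0, …, x^{D-1}]`, as a linear map. -/
noncomputable def pd (D : ℕ) (μ : Fin D) :
    MvPolynomial (Fin D) ℂ →ₗ[ℂ] MvPolynomial (Fin D) ℂ :=
  (pderiv μ).toLinearMap

/-- The raised-index derivative `∂^μ = η^{μμ} ∂_μ` for the Minkowski metric
`η = diag(-1, 1, …, 1)` (no sum over `μ`). -/
noncomputable def pdU (D : ℕ) (μ : Fin D) :
    MvPolynomial (Fin D) ℂ →ₗ[ℂ] MvPolynomial (Fin D) ℂ :=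
  (if (μ : ℕ) = 0 then (-1 : ℂ) else 1) • pd D μ

/-- The d'Alembertian `□ = Σ_μ ∂^μ ∂_μ`. -/
noncomputable def boxOp (D : ℕ) :
    MvPolynomial (Fin D) ℂ →ₗ[ℂ] MvPolynomial (Fin D) ℂ :=
  ∑ μ : Fin D, (pdU D μ) ∘ₗ (pd D μ)

theorem pd_apply (D : ℕ) (i : Fin D) (p : MvPolynomial (Fin D) ℂ) : pd D i p = pderiv i p := rfl

theorem pd_comm (D : ℕ) (i j : Fin D) (p : MvPolynomial (Fin D) ℂ) :
    pd D i (pd D j p) = pd D j (pd D i p) := by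
  ext m
  simp only [pd_apply, coeff_pderiv]
  rw [add_right_comm]
  by_cases h : i = j
  · subst h; rfl
  · simp [h, Ne.symm h]
    ring

/-- Formal integration in the variable `i`. -/
noncomputable def integ (D : ℕ) (i : Fin D) :
    MvPolynomial (Fin D) ℂ →ₗ[ℂ] MvPolynomial (Fin D) ℂ :=
  (basisMonomials (Fin D) ℂ).constr ℂ
    (fun m => monomial (m + Finsupp.single i 1) ((m i + 1 : ℂ)⁻¹))

theorem integ_monomial (D : ℕ) (i : Fin D) (m : Fin D →₀ ℕ) :
    integ D i (monomial m 1) = monomial (m + Finsupp.single i 1) ((m i + 1 : ℂ)⁻¹) := by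
  have := (basisMonomials (Fin D) ℂ).constr_basis ℂ
    (fun m => (monomial (m + Finsupp.single i 1) ((m i + 1 : ℂ)⁻¹) : MvPolynomial (Fin D) ℂ)) m
  rw [coe_basisMonomials] at this
  exact this

theorem integ_monomial' (D : ℕ) (i : Fin D) (m : Fin D →₀ ℕ) (a : ℂ) :
    integ D i (monomial m a) = monomial (m + Finsupp.single i 1) (a * (m i + 1 : ℂ)⁻¹) := by
  have : (monomial m a : MvPolynomial (Fin D) ℂ) = a • monomial m 1 := by
    simp [smul_monomial]
  rw [this, map_smul, integ_monomial, smul_monomial, smul_eq_mul]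

theorem pd_integ (D : ℕ) (i : Fin D) (p : MvPolynomial (Fin D) ℂ) :
    pd D i (integ D i p) = p := by
  induction p using MvPolynomial.induction_on' with
  | monomial m a =>
    rw [integ_monomial', pd_apply, pderiv_monomial]
    have : (m i + 1 : ℂ) ≠ 0 := Nat.cast_add_one_ne_zero (m i)
    simp [this]
  | add p q hp hq => simp only [map_add, hp, hq]

theorem pd_integ_comm (D : ℕ) (i j : Fin D) (h : i ≠ j) (p : MvPolynomial (Fin D) ℂ) :
    pd D i (integ D j p) = integ D j (pd D i p) := by
  induction p using MvPolynomial.induction_on' with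
  | monomial m a =>
    rw [integ_monomial', pd_apply, pd_apply, pderiv_monomial, pderiv_monomial, integ_monomial']
    by_cases hm : m i = 0
    · simp [hm, h.symm]
    · have e : m + Finsupp.single j 1 - Finsupp.single i 1
          = m - Finsupp.single i 1 + Finsupp.single j 1 := by
        ext k
        simp only [Finsupp.coe_add, Finsupp.coe_tsub, Pi.add_apply, Pi.sub_apply,
          Finsupp.single_apply]
        by_cases hk : i = k
        · subst hk; simp [h.symm]
        · simp [hk]
      rw [e]
      congr 1
      simp [h, h.symm]
      ring
  | add p q hp hq => simp only [map_add, hp, hq]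

/-- The spatial Laplacian. -/
noncomputable def lap (m : ℕ) :
    MvPolynomial (Fin (m + 2)) ℂ →ₗ[ℂ] MvPolynomial (Fin (m + 2)) ℂ :=
  ∑ i : Fin (m + 1), (pd (m + 2) i.succ) ∘ₗ (pd (m + 2) i.succ)

theorem lap_apply (m : ℕ) (p : MvPolynomial (Fin (m + 2)) ℂ) :
    lap m p = ∑ i : Fin (m + 1), pd (m + 2) i.succ (pd (m + 2) i.succ p) := by
  simp [lap]

theorem boxOp_eq (m : ℕ) (p : MvPolynomial (Fin (m + 2)) ℂ) :
    boxOp (m + 2) p = lap m p - pd (m + 2) 0 (pd (m + 2) 0 p) := by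
  rw [lap_apply, boxOp, Fin.sum_univ_succ]
  simp [pdU]
  ring

theorem pd_lap (m : ℕ) (j : Fin (m + 2)) (p : MvPolynomial (Fin (m + 2)) ℂ) :
    pd (m + 2) j (lap m p) = lap m (pd (m + 2) j p) := by
  simp only [lap_apply, map_sum]
  refine Finset.sum_congr rfl fun i _ => ?_
  rw [pd_comm, pd_comm _ j]

theorem pd_boxOp (m : ℕ) (j : Fin (m + 2)) (p : MvPolynomial (Fin (m + 2)) ℂ) :
    pd (m + 2) j (boxOp (m + 2) p) = boxOp (m + 2) (pd (m + 2) j p) := by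
  simp only [boxOp_eq, map_sub, pd_lap]
  rw [pd_comm, pd_comm _ j]

theorem lap_integ (m : ℕ) (p : MvPolynomial (Fin (m + 2)) ℂ) :
    lap m (integ (m + 2) 0 p) = integ (m + 2) 0 (lap m p) := by
  simp only [lap_apply, map_sum]
  refine Finset.sum_congr rfl fun i _ => ?_
  rw [pd_integ_comm _ _ _ (Fin.succ_ne_zero i), pd_integ_comm _ _ _ (Fin.succ_ne_zero i)]

theorem lap_pow_integ (m n : ℕ) (p : MvPolynomial (Fin (m + 2)) ℂ) :
    (lap m)^[n] (integ (m + 2) 0 p) = integ (m + 2) 0 ((lap m)^[n] p) := by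
  induction n generalizing p with
  | zero => rfl
  | succ n ih => rw [Function.iterate_succ_apply, Function.iterate_succ_apply, lap_integ, ih]

/-- All coefficients of degree at least `n` vanish. -/
def LowDeg {D : ℕ} (n : ℕ) (p : MvPolynomial (Fin D) ℂ) : Prop :=
  ∀ s : Fin D →₀ ℕ, n ≤ s.degree → coeff s p = 0

theorem LowDeg.pd {D n : ℕ} {p : MvPolynomial (Fin D) ℂ} (h : LowDeg (n + 1) p) (i : Fin D) :
    LowDeg n (pd D i p) := by
  intro s hs
  rw [pd_apply, coeff_pderiv, h, zero_mul]
  simp [hs]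

theorem LowDeg.mono {D n k : ℕ} {p : MvPolynomial (Fin D) ℂ} (h : LowDeg n p) (hk : n ≤ k) :
    LowDeg k p := fun s hs => h s (hk.trans hs)

theorem LowDeg.lap {m n : ℕ} {p : MvPolynomial (Fin (m + 2)) ℂ} (h : LowDeg (n + 1) p) :
    LowDeg n (lap m p) := by
  intro s hs
  rw [lap_apply, coeff_sum]
  exact Finset.sum_eq_zero fun i _ => ((h.pd i.succ).mono n.le_succ).pd i.succ s hs

theorem LowDeg.iter {m n : ℕ} {p : MvPolynomial (Fin (m + 2)) ℂ} (h : LowDeg n p) :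
    (_root_.lap m)^[n] p = 0 := by
  induction n generalizing p with
  | zero => ext s; simpa using h s (Nat.zero_le _)
  | succ n ih => rw [Function.iterate_succ_apply]; exact ih h.lap

theorem exists_lowDeg {D : ℕ} (p : MvPolynomial (Fin D) ℂ) : ∃ n, LowDeg n p := by
  refine ⟨p.totalDegree + 1, fun s hs => coeff_eq_zero_of_totalDegree_lt ?_⟩
  rw [Finsupp.degree_apply] at hs
  exact hs

theorem box_surj_aux (m n : ℕ) (u : MvPolynomial (Fin (m + 2)) ℂ) (hu : (lap m)^[n] u = 0) :
    ∃ v, boxOp (m + 2) v = u ∧ (pd (m + 2) 1 u = 0 → pd (m + 2) 1 v = 0) := by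
  induction n generalizing u with
  | zero =>
    have : u = 0 := hu
    exact ⟨0, by simp [this], by simp⟩
  | succ n ih =>
    obtain ⟨v, hv, hv'⟩ := ih (lap m (integ (m + 2) 0 (integ (m + 2) 0 u))) (by
      rw [← Function.iterate_succ_apply, lap_pow_integ, lap_pow_integ, hu, map_zero, map_zero])
    have h10 : (1 : Fin (m + 2)) ≠ 0 := by simp
    refine ⟨v - integ (m + 2) 0 (integ (m + 2) 0 u), ?_, fun h => ?_⟩
    · rw [map_sub, hv, boxOp_eq, pd_integ, pd_integ]
      ring
    · rw [map_sub, hv', pd_integ_comm _ _ _ h10, pd_integ_comm _ _ _ h10, h]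
      · simp
      · rw [pd_lap, pd_integ_comm _ _ _ h10, pd_integ_comm _ _ _ h10, h]
        simp

theorem box_surj (m : ℕ) (u : MvPolynomial (Fin (m + 2)) ℂ) :
    ∃ v, boxOp (m + 2) v = u ∧ (pd (m + 2) 1 u = 0 → pd (m + 2) 1 v = 0) := by
  obtain ⟨n, hn⟩ := exists_lowDeg u
  exact box_surj_aux m n u hn.iter

/-- `∂_1` is surjective on the kernel of `□`. -/
theorem harm_surj (m : ℕ) (g : MvPolynomial (Fin (m + 2)) ℂ) (hg : boxOp (m + 2) g = 0) :
    ∃ h, boxOp (m + 2) h = 0 ∧ pd (m + 2) 1 h = g := by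
  obtain ⟨v, hv, hv'⟩ := box_surj m (boxOp (m + 2) (integ (m + 2) 1 g))
  refine ⟨integ (m + 2) 1 g - v, by rw [map_sub, hv, sub_self], ?_⟩
  rw [map_sub, hv', pd_integ, sub_zero]
  rw [pd_boxOp, pd_integ, hg]

theorem div_single (m : ℕ) (h : MvPolynomial (Fin (m + 2)) ℂ) :
    ∑ μ, pdU (m + 2) μ ((Pi.single 1 h : Fin (m + 2) → MvPolynomial (Fin (m + 2)) ℂ) μ)
      = pd (m + 2) 1 h := by
  rw [Finset.sum_eq_single 1]
  · simp [pdU]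
  · intro b _ hb
    simp [Pi.single_eq_of_ne hb]
  · simp

/-- Exactness of the sequence `0 → Ω⁰ →(d) Ω¹ →(δd) Ω¹ →(δ) Ω⁰ → 0` at its last two terms:
(i) the divergence `δ : P ↦ Σ_μ ∂^μ P_μ` is surjective onto polynomials, and
(ii) every divergence-free polynomial vector field `P` can be written as
`P_μ = □Q_μ − ∂_μ(Σ_ν ∂^ν Q_ν)` for some polynomial vector field `Q`. -/
theorem sequence_exact_at_last_two_terms (D : ℕ) (hD : 2 ≤ D) :
    (∀ f : MvPolynomial (Fin D) ℂ, ∃ P : Fin D → MvPolynomial (Fin D) ℂ,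
      f = ∑ μ, pdU D μ (P μ)) ∧
    (∀ P : Fin D → MvPolynomial (Fin D) ℂ, (∑ μ, pdU D μ (P μ)) = 0 →
      ∃ Q : Fin D → MvPolynomial (Fin D) ℂ,
        ∀ μ, P μ = boxOp D (Q μ) - pd D μ (∑ ν, pdU D ν (Q ν))) := by
  obtain ⟨m, rfl⟩ := Nat.exists_eq_add_of_le' hD
  refine ⟨fun f => ⟨Pi.single 1 (integ (m + 2) 1 f), ?_⟩, fun P hP => ?_⟩
  · rw [div_single, pd_integ]
  · choose Q hQ _ using fun μ => box_surj m (P μ)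
    have hg : boxOp (m + 2) (∑ μ, pdU (m + 2) μ (Q μ)) = 0 := by
      rw [← hP, map_sum]
      refine Finset.sum_congr rfl fun μ _ => ?_
      rw [← hQ μ]
      simp only [pdU, LinearMap.smul_apply, map_smul, pd_boxOp]
    obtain ⟨h, hh, hh'⟩ := harm_surj m _ hg
    refine ⟨Q - Pi.single 1 h, fun μ => ?_⟩
    have h0 : ∑ ν, pdU (m + 2) ν ((Q - Pi.single 1 h : Fin (m + 2) → MvPolynomial (Fin (m + 2)) ℂ) ν) = 0 := by
      simp only [Pi.sub_apply, map_sub, Finset.sum_sub_distrib]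
      rw [div_single, hh', sub_self]
    rw [h0, map_zero, sub_zero, Pi.sub_apply, map_sub, hQ]
    by_cases hμ : μ = 1
    · subst hμ; simp [hh]
    · simp [Pi.single_eq_of_ne hμ]
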